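/- arXiv:2306.05839 — 7 statements merged into one kernel-verified Lean document; each statement's English description precedes it below -/
import Mathlib

section
/- Let n ≥ 2 and let M ⊂ ℝⁿ be a bounded open connected set with closure M̄. Let a : M̄ × ℝ → ℝ be C² with a(x,0) = 0 and ∂_μ a(x,μ) ≥ 0 for all (x,μ) ∈ M̄ × ℝ. Suppose there exist a C² function F : ℝ → ℝ and constants δ, ε > 0 with F(0) = 0, F'(μ) ≥ 0 for all μ ∈ ℝ, |F(μ)| ≥ δ|μ|^{1+ε} for all μ ∈ ℝ, and such that F(μ) ≤ a(x,μ) for all x ∈ M̄ and μ ≥ 0, while a(x,μ) ≤ F(μ) for all x ∈ M̄ and μ ≤ 0. Then for every h > 0 there exists a constant C_h > 0 such that every function u : M̄ → ℝ that is continuous on M̄, twice continuously differentiable on M, and satisfies −Δu(x) + a(x,u(x)) = 0 for all x ∈ M, obeys |u(x)| ≤ C_h for every x ∈ M with dist(x, ∂M) ≥ h. -/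
/-!
This is the Keller–Osserman interior bound. On a closed ball of radius `r` around `x₀` contained in
`M`, put `ρ x = r² - ‖x - x₀‖²` and pick `p ∈ ℕ` with `p ε ≥ 2`. If `u x₀ > 0`, then `ρ ^ p * u` attains a
positive maximum `K` over the closed ball at an interior point `x₁`, so the barrier `K ρ ^ (-p)`
touches `u` from above at `x₁`. The second derivative test in each coordinate direction gives
`Δu(x₁) ≤ Δ(K ρ ^ (-p))(x₁) ≤ A u(x₁) ρ(x₁)⁻²` with `A` depending only on `n`, `p`, `r`, whereas the
equation and the growth of `F` force `Δu(x₁) ≥ δ u(x₁) ^ (1 + ε)`. Hence `u(x₁) ^ ε ρ(x₁) ² ≤ A / δ`,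
and since `p ε ≥ 2` this bounds `K`, hence `u x₀` (`exists_bound_of_absorption`). The lower bound
on `u` is the same statement for `-u`.
-/

open Set Metric

/-- The Euclidean Laplacian `Δu(x) = ∑ i, ∂²u/∂xᵢ²(x)`. -/
noncomputable def lap {n : ℕ} (u : EuclideanSpace ℝ (Fin n) → ℝ)
    (x : EuclideanSpace ℝ (Fin n)) : ℝ :=
  ∑ i : Fin n,
    fderiv ℝ (fun y => fderiv ℝ u y (EuclideanSpace.single i 1)) x (EuclideanSpace.single i 1)

open Filter Topology

/-- The necessary second-order condition at a local maximum. -/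
lemma second_deriv_nonpos {G G' : ℝ → ℝ} {c : ℝ}
    (hG : ∀ᶠ t in 𝓝 (0 : ℝ), HasDerivAt G (G' t) t) (hG' : HasDerivAt G' c 0)
    (hmax : IsLocalMax G 0) : c ≤ 0 := by
  by_contra! hc
  have hd : deriv G =ᶠ[𝓝 0] G' := hG.mono fun t ht => ht.deriv
  have hdd : deriv (deriv G) 0 = c := by rw [hd.deriv_eq, hG'.deriv]
  -- If `c > 0`, the point is also a local minimum, so `G` is locally constant and `c = 0`.
  have hmin : IsLocalMin G 0 :=
    isLocalMin_of_deriv_deriv_pos (by rw [hdd]; exact hc) hmax.deriv_eq_zero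
      hG.self_of_nhds.continuousAt
  have hconst : G =ᶠ[𝓝 0] fun _ => G 0 := by
    filter_upwards [hmin, hmax] with t h1 h2 using le_antisymm h2 h1
  have h0 : deriv G =ᶠ[𝓝 0] fun _ => 0 := by
    simpa using hconst.deriv
  rw [h0.deriv_eq] at hdd
  simp at hdd
  exact hc.ne hdd

/-- If `K ρ ^ (-p)` with `ρ z = s - ‖z - x₀‖²` touches `u` from above at `x`, then each pure second
derivative of `u` at `x` is at most that of the barrier. -/
lemma second_partial_le {n : ℕ} {u : EuclideanSpace ℝ (Fin n) → ℝ}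
    {x x₀ : EuclideanSpace ℝ (Fin n)} {s K : ℝ} {p : ℕ}
    (hu : ContDiffAt ℝ 2 u x) (hρ : 0 < s - ‖x - x₀‖ ^ 2)
    (hle : ∀ᶠ z in 𝓝 x, u z ≤ K * (s - ‖z - x₀‖ ^ 2) ^ (-(p : ℤ)))
    (heq : u x = K * (s - ‖x - x₀‖ ^ 2) ^ (-(p : ℤ))) (i : Fin n) :
    fderiv ℝ (fun y => fderiv ℝ u y (EuclideanSpace.single i 1)) x (EuclideanSpace.single i 1) ≤
      K * (p * (p + 1) * (s - ‖x - x₀‖ ^ 2) ^ (-(p : ℤ) - 2) * (4 * ((x - x₀) i) ^ 2)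
        + 2 * p * (s - ‖x - x₀‖ ^ 2) ^ (-(p : ℤ) - 1)) := by
  set e : EuclideanSpace ℝ (Fin n) := EuclideanSpace.single i 1 with he
  set y := (x - x₀) i with hy
  set R := s - ‖x - x₀‖ ^ 2 with hR
  have hline : ∀ t : ℝ, HasDerivAt (fun t : ℝ => x + t • e) e t := fun t => by
    simpa using ((hasDerivAt_id t).smul_const e).const_add x
  have hcont : Tendsto (fun t : ℝ => x + t • e) (𝓝 0) (𝓝 x) := by
    have := (hline 0).continuousAt.tendsto
    simpa using this
  have hq : ∀ t : ℝ, s - ‖x + t • e - x₀‖ ^ 2 = R - 2 * y * t - t ^ 2 := by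
    intro t
    have h1 : x + t • e - x₀ = (x - x₀) + t • e := by abel
    have h2 : inner ℝ (x - x₀) e = y := by
      rw [he, EuclideanSpace.inner_single_right]; simp [hy]
    have h3 : ‖e‖ = 1 := by simp [he]
    rw [h1, norm_add_sq_real, inner_smul_right, h2, norm_smul, h3, hR, Real.norm_eq_abs, mul_one,
      sq_abs]
    ring
  have hqd : ∀ t : ℝ, HasDerivAt (fun t : ℝ => R - 2 * y * t - t ^ 2) (-(2 * y) - 2 * t) t := by
    intro t
    have := (((hasDerivAt_id t).const_mul (2 * y)).const_sub R).sub ((hasDerivAt_id t).pow 2)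
    refine this.congr_deriv ?_
    simp
  have hqpos : ∀ᶠ t in 𝓝 (0 : ℝ), 0 < R - 2 * y * t - t ^ 2 := by
    have := (hqd 0).continuousAt.tendsto
    refine this.eventually (lt_mem_nhds ?_)
    simpa using hρ
  have hv : ∀ (m : ℤ) (t : ℝ), 0 < R - 2 * y * t - t ^ 2 →
      HasDerivAt (fun t : ℝ => (R - 2 * y * t - t ^ 2) ^ m)
        (m * (R - 2 * y * t - t ^ 2) ^ (m - 1) * (-(2 * y) - 2 * t)) t := by
    intro m t ht
    exact (hasDerivAt_zpow m _ (Or.inl ht.ne')).comp t (hqd t)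
  have hu1 : ∀ᶠ z in 𝓝 x, DifferentiableAt ℝ u z := by
    filter_upwards [hu.eventually (by simp)] with z hz using hz.differentiableAt (by simp)
  have hu2 : DifferentiableAt ℝ (fun z => fderiv ℝ u z e) x := by
    have : ContDiffAt ℝ 1 (fderiv ℝ u) x := hu.fderiv_right (by norm_num)
    exact (this.differentiableAt (by simp)).clm_apply (differentiableAt_const e)
  have hG : ∀ᶠ t in 𝓝 (0 : ℝ),
      HasDerivAt (fun t : ℝ => u (x + t • e) - K * (R - 2 * y * t - t ^ 2) ^ (-(p : ℤ)))
        (fderiv ℝ u (x + t • e) e - K * (((-(p : ℤ) : ℤ) : ℝ) *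
          (R - 2 * y * t - t ^ 2) ^ (-(p : ℤ) - 1) * (-(2 * y) - 2 * t))) t := by
    filter_upwards [hcont.eventually hu1, hqpos] with t h1 h2
    exact (h1.hasFDerivAt.comp_hasDerivAt t (hline t)).sub ((hv _ t h2).const_mul K)
  have hR0 : 0 < R - 2 * y * 0 - 0 ^ 2 := by simpa using hρ
  have hu2' : HasDerivAt (fun t : ℝ => fderiv ℝ u (x + t • e) e)
      (fderiv ℝ (fun z => fderiv ℝ u z e) x e) 0 := by
    have hx0 : x + (0 : ℝ) • e = x := by simp
    have h : HasFDerivAt (fun z => fderiv ℝ u z e) (fderiv ℝ (fun z => fderiv ℝ u z e) x)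
        (x + (0 : ℝ) • e) := by rw [hx0]; exact hu2.hasFDerivAt
    exact h.comp_hasDerivAt (0 : ℝ) (hline 0)
  have hlin : HasDerivAt (fun t : ℝ => -(2 * y) - 2 * t) (-2) 0 := by
    simpa using ((hasDerivAt_id (0 : ℝ)).const_mul 2).const_sub (-(2 * y))
  have hG' := hu2'.sub (((((hv (-(p : ℤ) - 1) 0 hR0).const_mul
    (((-(p : ℤ) : ℤ) : ℝ))).mul hlin)).const_mul K)
  have hmax : IsLocalMax
      (fun t : ℝ => u (x + t • e) - K * (R - 2 * y * t - t ^ 2) ^ (-(p : ℤ))) 0 := by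
    filter_upwards [hcont.eventually hle] with t ht
    rw [hq] at ht
    simp only [zero_smul, add_zero, mul_zero, sub_zero, ne_eq, OfNat.ofNat_ne_zero,
      not_false_eq_true, zero_pow, heq, sub_self]
    linarith
  have := second_deriv_nonpos hG hG' hmax
  have h2 : -(p : ℤ) - 1 - 1 = -(p : ℤ) - 2 := by ring
  simp only [mul_zero, sub_zero, ne_eq, OfNat.ofNat_ne_zero, not_false_eq_true, zero_pow, h2] at this
  push_cast at this
  linarith [this]

/-- Interior bound for functions with `Δu ≥ δ u ^ (1 + ε)` on their positivity set: at the centre of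
a ball of radius `r` they are bounded above by a constant independent of `u` and of the centre. -/
lemma exists_bound_of_absorption (n : ℕ) {δ ε r : ℝ} (hδ : 0 < δ) (hε : 0 < ε) (hr : 0 < r) :
    ∃ C : ℝ, 0 < C ∧ ∀ (u : EuclideanSpace ℝ (Fin n) → ℝ) (x₀ : EuclideanSpace ℝ (Fin n)),
      (∀ x ∈ closedBall x₀ r, ContDiffAt ℝ 2 u x) →
      (∀ x ∈ closedBall x₀ r, 0 < u x → δ * u x ^ (1 + ε) ≤ lap u x) → u x₀ ≤ C := by
  obtain ⟨p, hp⟩ := exists_nat_ge (2 / ε)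
  have hpε : 2 ≤ p * ε := by rwa [div_le_iff₀ hε] at hp
  have hp0 : p ≠ 0 := by rintro rfl; norm_num at hpε
  set A : ℝ := 2 * p * n * r ^ 2 + 4 * p * (p + 1) * r ^ 2 with hA
  have hA0 : 0 ≤ A := by positivity
  set B : ℝ := A / δ * (r ^ 2) ^ (p * ε - 2) with hB
  have hB0 : 0 ≤ B := by positivity
  refine ⟨B ^ (1 / ε) / (r ^ 2) ^ p + 1, by positivity, fun u x₀ hu hlap => ?_⟩
  rcases le_or_gt (u x₀) 0 with hneg | hpos
  · exact hneg.trans (by positivity)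
  have hcontu : ContinuousOn u (closedBall x₀ r) :=
    fun x hx => (hu x hx).continuousAt.continuousWithinAt
  obtain ⟨x, hx, hmax⟩ := (isCompact_closedBall x₀ r).exists_isMaxOn
    ⟨x₀, mem_closedBall_self hr.le⟩
    (f := fun z => (r ^ 2 - ‖z - x₀‖ ^ 2) ^ p * u z)
    (ContinuousOn.mul (by fun_prop) hcontu)
  set K := (r ^ 2 - ‖x - x₀‖ ^ 2) ^ p * u x with hK
  have hK0 : (r ^ 2) ^ p * u x₀ ≤ K := by
    have := hmax (mem_closedBall_self hr.le)
    simpa using this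
  have hKpos : 0 < K := lt_of_lt_of_le (by positivity) hK0
  have hxr : ‖x - x₀‖ ≤ r := by simpa [dist_eq_norm] using hx
  have hρ0 : 0 ≤ r ^ 2 - ‖x - x₀‖ ^ 2 := by nlinarith [norm_nonneg (x - x₀)]
  have hρ : 0 < r ^ 2 - ‖x - x₀‖ ^ 2 := by
    refine lt_of_le_of_ne hρ0 fun h => ?_
    rw [hK, ← h, zero_pow hp0, zero_mul] at hKpos
    exact lt_irrefl _ hKpos
  have hux : 0 < u x := pos_of_mul_pos_right hKpos (by positivity)
  have heq : u x = K * (r ^ 2 - ‖x - x₀‖ ^ 2) ^ (-(p : ℤ)) := by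
    rw [hK, zpow_neg, zpow_natCast]; field_simp
  have hev : ∀ᶠ z in 𝓝 x, 0 < r ^ 2 - ‖z - x₀‖ ^ 2 := by
    have hc : Continuous fun z : EuclideanSpace ℝ (Fin n) => r ^ 2 - ‖z - x₀‖ ^ 2 := by fun_prop
    exact hc.continuousAt.eventually (lt_mem_nhds hρ)
  have hle : ∀ᶠ z in 𝓝 x, u z ≤ K * (r ^ 2 - ‖z - x₀‖ ^ 2) ^ (-(p : ℤ)) := by
    filter_upwards [hev] with z hz
    have hzr : z ∈ closedBall x₀ r := by
      rw [mem_closedBall, dist_eq_norm]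
      exact (abs_le_of_sq_le_sq' (by linarith) hr.le).2
    have h1 : (r ^ 2 - ‖z - x₀‖ ^ 2) ^ p * u z ≤ K := hmax hzr
    rw [zpow_neg, zpow_natCast, ← div_eq_mul_inv, le_div_iff₀ (by positivity)]
    linarith
  have hi := second_partial_le (hu x hx) hρ hle heq
  set R := r ^ 2 - ‖x - x₀‖ ^ 2 with hR
  have hRr : R ≤ r ^ 2 := by rw [hR]; nlinarith [norm_nonneg (x - x₀)]
  have hz1 : R ^ (-(p : ℤ) - 1) = R ^ (-(p : ℤ)) * R⁻¹ := by
    rw [zpow_sub₀ hρ.ne', zpow_one, div_eq_mul_inv]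
  have hz2 : R ^ (-(p : ℤ) - 2) = R ^ (-(p : ℤ)) * (R ^ 2)⁻¹ := by
    rw [zpow_sub₀ hρ.ne', div_eq_mul_inv]; rfl
  have hsum : lap u x ≤ u x * (4 * p * (p + 1) * ‖x - x₀‖ ^ 2 * (R ^ 2)⁻¹ + 2 * p * n * R⁻¹) := by
    refine (Finset.sum_le_sum fun i _ => hi i).trans_eq ?_
    rw [heq, EuclideanSpace.real_norm_sq_eq, ← Finset.mul_sum, Finset.sum_add_distrib,
      ← Finset.mul_sum, ← Finset.mul_sum, hz1, hz2]
    simp only [Finset.sum_const, Finset.card_univ, Fintype.card_fin, nsmul_eq_mul]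
    ring
  have hbound : lap u x * R ^ 2 ≤ u x * A := by
    calc lap u x * R ^ 2
        ≤ u x * (4 * p * (p + 1) * ‖x - x₀‖ ^ 2 * (R ^ 2)⁻¹ + 2 * p * n * R⁻¹) * R ^ 2 := by gcongr
      _ = u x * (4 * p * (p + 1) * ‖x - x₀‖ ^ 2 + 2 * p * n * R) := by field_simp
      _ ≤ u x * (4 * p * (p + 1) * r ^ 2 + 2 * p * n * r ^ 2) := by gcongr
      _ = u x * A := by rw [hA]; ring
  have hmain : u x ^ ε * R ^ 2 ≤ A / δ := by
    have h1 := hlap x hx hux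
    rw [Real.rpow_add hux, Real.rpow_one] at h1
    have h2 : u x * (δ * (u x ^ ε * R ^ 2)) ≤ u x * A := by
      calc u x * (δ * (u x ^ ε * R ^ 2)) = (δ * (u x * u x ^ ε)) * R ^ 2 := by ring
        _ ≤ lap u x * R ^ 2 := by gcongr
        _ ≤ _ := hbound
    rw [le_div_iff₀ hδ, mul_comm]
    exact le_of_mul_le_mul_left h2 hux
  have hKε : K ^ ε ≤ B := by
    have h1 : K ^ ε = (u x ^ ε * R ^ 2) * R ^ (p * ε - 2) := by
      rw [hK, Real.mul_rpow (by positivity) hux.le, ← Real.rpow_natCast, ← Real.rpow_mul hρ0,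
        Real.rpow_sub hρ, Real.rpow_two]
      field_simp
    rw [h1, hB]
    have : R ^ (p * ε - 2) ≤ (r ^ 2) ^ (p * ε - 2) :=
      Real.rpow_le_rpow hρ0 hRr (by linarith)
    gcongr
  have hKB : K ≤ B ^ (1 / ε) := by
    calc K = (K ^ ε) ^ (1 / ε) := by
          rw [← Real.rpow_mul hKpos.le, mul_one_div_cancel hε.ne', Real.rpow_one]
      _ ≤ _ := Real.rpow_le_rpow (by positivity) hKε (by positivity)
  have : u x₀ ≤ B ^ (1 / ε) / (r ^ 2) ^ p := by
    rw [le_div_iff₀ (by positivity)]; linarith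
  linarith

lemma lap_neg' {n : ℕ} (u : EuclideanSpace ℝ (Fin n) → ℝ) (x : EuclideanSpace ℝ (Fin n)) :
    lap (fun z => -u z) x = -lap u x := by
  simp only [lap, fderiv_fun_neg, _root_.neg_apply, Finset.sum_neg_distrib]

/-- Connectedness of the ball: starting in `M` and missing `∂M`, it cannot leave `M`. -/
lemma closedBall_subset_of_infDist {E : Type*} [NormedAddCommGroup E] [NormedSpace ℝ E]
    {M : Set E} {x : E} {h : ℝ} (hx : x ∈ M) (hh : 0 < h) (hd : h ≤ infDist x (frontier M)) :
    closedBall x (h / 2) ⊆ M := by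
  have hdisj : closedBall x (h / 2) ∩ frontier M = ∅ := by
    rw [eq_empty_iff_forall_notMem]
    rintro z ⟨hz, hzf⟩
    have h1 := infDist_le_dist_of_mem (x := x) hzf
    rw [mem_closedBall, dist_comm] at hz
    linarith
  have hcl : ∀ z ∈ closedBall x (h / 2), z ∈ closure M → z ∈ interior M := fun z hz hzc => by
    by_contra hzi
    exact (eq_empty_iff_forall_notMem.1 hdisj) z ⟨hz, hzc, hzi⟩
  by_contra hsub
  obtain ⟨z, hz, hzM⟩ := not_subset.1 hsub
  have hxb : x ∈ closedBall x (h / 2) := mem_closedBall_self (by linarith)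
  -- The ball would be split by the disjoint open sets `interior M` and `(closure M)ᶜ`.
  obtain ⟨w, -, hw1, hw2⟩ := (convex_closedBall x (h / 2)).isPreconnected (interior M) (closure M)ᶜ
    isOpen_interior isClosed_closure.isOpen_compl
    (fun w hw => (em (w ∈ closure M)).imp (hcl w hw) id)
    ⟨x, hxb, hcl x hxb (subset_closure hx)⟩
    ⟨z, hz, fun hzc => hzM (interior_subset (hcl z hz hzc))⟩
  exact hw2 (interior_subset_closure hw1)

theorem stmt_0 (n : ℕ) (hn : 2 ≤ n) (M : Set (EuclideanSpace ℝ (Fin n)))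
    (hMopen : IsOpen M) (hMbdd : Bornology.IsBounded M) (hMconn : IsConnected M)
    (a : EuclideanSpace ℝ (Fin n) × ℝ → ℝ)
    (ha : ContDiffOn ℝ 2 a (closure M ×ˢ (univ : Set ℝ)))
    (ha0 : ∀ x ∈ closure M, a (x, 0) = 0)
    (hamono : ∀ x ∈ closure M, ∀ μ : ℝ, 0 ≤ deriv (fun t => a (x, t)) μ)
    (F : ℝ → ℝ) (δ ε : ℝ) (hδ : 0 < δ) (hε : 0 < ε)
    (hF : ContDiff ℝ 2 F) (hF0 : F 0 = 0)
    (hFmono : ∀ μ : ℝ, 0 ≤ deriv F μ)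
    (hFgrow : ∀ μ : ℝ, δ * |μ| ^ (1 + ε) ≤ |F μ|)
    (hlow : ∀ x ∈ closure M, ∀ μ : ℝ, 0 ≤ μ → F μ ≤ a (x, μ))
    (hupp : ∀ x ∈ closure M, ∀ μ : ℝ, μ ≤ 0 → a (x, μ) ≤ F μ) :
    ∀ h : ℝ, 0 < h → ∃ C : ℝ, 0 < C ∧
      ∀ u : EuclideanSpace ℝ (Fin n) → ℝ,
        ContinuousOn u (closure M) → ContDiffOn ℝ 2 u M →
        (∀ x ∈ M, -lap u x + a (x, u x) = 0) →
        ∀ x ∈ M, h ≤ Metric.infDist x (frontier M) → |u x| ≤ C := by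
  intro h hh
  obtain ⟨C, hC, hbound⟩ := exists_bound_of_absorption n hδ hε (half_pos hh)
  refine ⟨C, hC, fun u _ hu heq x hx hd => ?_⟩
  have hsub := closedBall_subset_of_infDist hx hh hd
  have hFm : Monotone F := monotone_of_deriv_nonneg (hF.differentiable (by simp)) hFmono
  have hsm : ∀ z ∈ closedBall x (h / 2), ContDiffAt ℝ 2 u z :=
    fun z hz => hu.contDiffAt (hMopen.mem_nhds (hsub hz))
  rw [abs_le']
  constructor
  · refine hbound u x hsm fun z hz hpos => ?_
    have h1 := hFgrow (u z)
    rw [abs_of_pos hpos, abs_of_nonneg (hF0 ▸ hFm hpos.le)] at h1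
    linarith [hlow z (subset_closure (hsub hz)) (u z) hpos.le, heq z (hsub hz)]
  · refine hbound (fun z => -u z) x (fun z hz => (hsm z hz).neg) fun z hz hpos => ?_
    have hneg : u z < 0 := by linarith
    have h1 := hFgrow (u z)
    rw [abs_of_neg hneg, abs_of_nonpos (hF0 ▸ hFm hneg.le)] at h1
    rw [lap_neg']
    linarith [hupp z (subset_closure (hsub hz)) (u z) hneg.le, heq z (hsub hz)]
end

section
/- Let n ≥ 2 be an integer and let F : ℝ → ℝ be C² with F(0) = 0, F'(μ) ≥ 0 for all μ ∈ ℝ, and |F(μ)| ≥ δ|μ|^{1+ε} for all μ ∈ ℝ, for some δ, ε > 0. Then there exists a constant C > 0, depending only on n, δ, ε and F, with the following property: for every function v : [0,1] → ℝ that is continuously differentiable on [0,1] and twice continuously differentiable on (0,1), satisfying v'(0) = 0, v''(r) + ((n−1)/r) v'(r) = F(v(r)) for all r ∈ (0,1), v(r) ≥ 0 for all r ∈ [0,1], and v'(r) ≥ 0 for all r ∈ [0,1], one has v(0) ≤ C. In particular the bound is independent of the boundary value v(1). -/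
/-!
The bound comes from comparison with the Keller–Osserman type barrier
`w r = K * (1 - r ^ 2) ^ (-p)` with `p = 2 / ε`. Since `p * (1 + ε) = p + 2`, a suitable `K` depending
only on `n`, `δ`, `ε` makes `w` a supersolution: `w'' + (n - 1) / r * w' ≤ δ * w ^ (1 + ε)`
on `(0, 1)` (`barrier_super`), and `w` blows up at `r = 1`.

Suppose `v 0 > K = w 0`. As `w` blows up at `1` while `v` stays bounded, there is a first radius `r₁`
with `v r₁ ≤ w r₁`. On `(0, r₁)` we have `v > w`, so
`(r ^ (n - 1) * (v' - w'))' = r ^ (n - 1) * (F v - (w'' + (n - 1) / r * w')) ≥ 0`, because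
`F v ≥ δ * v ^ (1 + ε)` for `v ≥ 0`. Hence `v' ≥ w'` there, so `v - w` is nondecreasing on `[0, r₁]`
and `v r₁ - w r₁ ≥ v 0 - K > 0`, a contradiction. Therefore `v 0 ≤ K`.
-/

open Set

lemma one_sub_sq_pos {r : ℝ} (h0 : 0 ≤ r) (h1 : r < 1) : 0 < 1 - r ^ 2 := by nlinarith

lemma hasDerivAt_barrier_power (q : ℝ) {r : ℝ} (h : 0 < 1 - r ^ 2) :
    HasDerivAt (fun r : ℝ => (1 - r ^ 2) ^ (-q)) (2 * q * r * (1 - r ^ 2) ^ (-q - 1)) r := by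
  have h1 : HasDerivAt (fun r : ℝ => 1 - r ^ 2) (-(2 * r)) r := by
    simpa using (hasDerivAt_pow 2 r).const_sub 1
  convert h1.rpow_const (p := -q) (Or.inl h.ne') using 1
  ring

/-- The barrier is a supersolution in divergence form: the left-hand side is the derivative of
`r ^ m * w' r = 2 * p * K * r ^ (m + 1) * (1 - r ^ 2) ^ (-p - 1)`, where `m + 1` is the dimension. -/
lemma barrier_super {m : ℕ} {δ ε p K r : ℝ} (hp : 0 < p) (hpε : p * ε = 2) (hK : 0 < K)
    (hKε : δ * K ^ ε = 2 * p * ((m + 1) + 2 * (p + 1))) (h0 : 0 < r) (h1 : r < 1) :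
    2 * p * K * (((m + 1 : ℝ) * r ^ m) * (1 - r ^ 2) ^ (-(p + 1))
      + r ^ (m + 1) * (2 * (p + 1) * r * (1 - r ^ 2) ^ (-(p + 1) - 1)))
    ≤ r ^ m * (δ * (K * (1 - r ^ 2) ^ (-p)) ^ (1 + ε)) := by
  have hs := one_sub_sq_pos h0.le h1
  set s := 1 - r ^ 2 with hsdef
  have e1 : (K * s ^ (-p)) ^ (1 + ε) = K * K ^ ε * s ^ (-(p + 1) - 1) := by
    rw [Real.mul_rpow hK.le (Real.rpow_nonneg hs.le _), Real.rpow_add hK, Real.rpow_one,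
      ← Real.rpow_mul hs.le]
    congr 2
    linarith
  have e2 : s ^ (-(p + 1)) = s * s ^ (-(p + 1) - 1) := by
    nth_rewrite 2 [← Real.rpow_one s]
    rw [← Real.rpow_add hs]
    congr 1
    ring
  have hT : 0 < s ^ (-(p + 1) - 1) := Real.rpow_pos_of_pos hs _
  rw [e1, e2]
  set T := s ^ (-(p + 1) - 1)
  have e3 : r ^ m * (δ * (K * K ^ ε * T)) = K * T * r ^ m * (δ * K ^ ε) := by ring
  rw [e3, hKε]
  have hr2 : r ^ 2 ≤ 1 := by nlinarith
  have hs1 : s ≤ 1 := by nlinarith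
  have hX : 0 ≤ 2 * p * K * T * r ^ m := by positivity
  have key : (m + 1 : ℝ) * s + 2 * (p + 1) * r ^ 2 ≤ (m + 1) + 2 * (p + 1) := by
    have hm : (0 : ℝ) ≤ m := Nat.cast_nonneg m
    nlinarith
  calc _ = 2 * p * K * T * r ^ m * ((m + 1 : ℝ) * s + 2 * (p + 1) * r ^ 2) := by ring
    _ ≤ 2 * p * K * T * r ^ m * ((m + 1) + 2 * (p + 1)) := mul_le_mul_of_nonneg_left key hX
    _ = _ := by ring

theorem stmt_3 (n : ℕ) (hn : 2 ≤ n)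
    (F : ℝ → ℝ) (δ ε : ℝ) (hδ : 0 < δ) (hε : 0 < ε)
    (hF : ContDiff ℝ 2 F) (hF0 : F 0 = 0)
    (hFmono : ∀ μ : ℝ, 0 ≤ deriv F μ)
    (hFgrow : ∀ μ : ℝ, δ * |μ| ^ (1 + ε) ≤ |F μ|) :
    ∃ C : ℝ, 0 < C ∧
      ∀ v v' v'' : ℝ → ℝ,
        (∀ r ∈ Icc (0:ℝ) 1, HasDerivWithinAt v (v' r) (Icc (0:ℝ) 1) r) →
        ContinuousOn v' (Icc (0:ℝ) 1) →
        (∀ r ∈ Ioo (0:ℝ) 1, HasDerivAt v' (v'' r) r) →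
        ContinuousOn v'' (Ioo (0:ℝ) 1) →
        v' 0 = 0 →
        (∀ r ∈ Ioo (0:ℝ) 1, v'' r + (((n : ℝ) - 1) / r) * v' r = F (v r)) →
        (∀ r ∈ Icc (0:ℝ) 1, 0 ≤ v r) →
        (∀ r ∈ Icc (0:ℝ) 1, 0 ≤ v' r) →
        v 0 ≤ C := by
  obtain ⟨m, rfl⟩ : ∃ m, n = m + 1 := ⟨n - 1, by omega⟩
  have hFm : Monotone F := monotone_of_deriv_nonneg (hF.differentiable (by norm_num)) hFmono
  have hFlow : ∀ x : ℝ, 0 ≤ x → δ * x ^ (1 + ε) ≤ F x := by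
    intro x hx
    have h1 := hFgrow x
    have h2 : 0 ≤ F x := hF0 ▸ hFm hx
    rwa [abs_of_nonneg hx, abs_of_nonneg h2] at h1
  obtain ⟨p, hp, hpε⟩ : ∃ p : ℝ, 0 < p ∧ p * ε = 2 := ⟨2 / ε, by positivity, by field_simp⟩
  obtain ⟨K, hK, hKε⟩ : ∃ K : ℝ, 0 < K ∧ δ * K ^ ε = 2 * p * ((m + 1) + 2 * (p + 1)) := by
    refine ⟨(2 * p * ((m + 1) + 2 * (p + 1)) / δ) ^ ε⁻¹, by positivity, ?_⟩
    rw [Real.rpow_inv_rpow (by positivity) hε.ne']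
    field_simp
  refine ⟨K, hK, ?_⟩
  intro v v' v'' hv hv'c hv' _ hv'0 hode hv0 _
  by_contra! hlt
  have hvc : ContinuousOn v (Icc 0 1) := fun r hr => (hv r hr).continuousWithinAt
  -- Comparing `v * (1 - r ^ 2) ^ p` with `K` avoids the singularity of the barrier at `r = 1`.
  let u : ℝ → ℝ := fun r => v r * (1 - r ^ 2) ^ p - K
  have huc : ContinuousOn u (Icc 0 1) := by
    refine (hvc.mul ?_).sub continuousOn_const
    exact ContinuousOn.rpow_const (by fun_prop) (fun _ _ => Or.inr hp.le)
  have hu0 : 0 < u 0 := by simp [u, hlt]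
  have hu1 : u 1 < 0 := by simp [u, Real.zero_rpow hp.ne', hK]
  obtain ⟨c, hc, huc0⟩ := intermediate_value_Icc' zero_le_one huc ⟨hu1.le, hu0.le⟩
  have hc1 : c < 1 := lt_of_le_of_ne hc.2 (by rintro rfl; linarith)
  have hcomp : IsCompact (Icc (0 : ℝ) 1 ∩ u ⁻¹' Iic 0) :=
    isCompact_Icc.of_isClosed_subset (huc.preimage_isClosed_of_isClosed isClosed_Icc isClosed_Iic)
      inter_subset_left
  obtain ⟨R, ⟨hR, huR⟩, hRmin⟩ := hcomp.exists_isLeast ⟨c, hc, huc0.le⟩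
  have hR1 : R < 1 := (hRmin ⟨hc, huc0.le⟩).trans_lt hc1
  have hR0 : 0 < R := lt_of_le_of_ne hR.1 (by rintro rfl; exact absurd hu0 (not_lt.mpr huR))
  have hmul : ∀ r : ℝ, 0 < 1 - r ^ 2 → (1 - r ^ 2) ^ (-p) * (1 - r ^ 2) ^ p = 1 := by
    intro r hr
    rw [← Real.rpow_add hr]; simp
  have hsub : Icc 0 R ⊆ Icc (0 : ℝ) 1 := Icc_subset_Icc_right hR1.le
  have hbelow : ∀ r ∈ Ioo 0 R, K * (1 - r ^ 2) ^ (-p) ≤ v r := by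
    intro r hr
    have hs := one_sub_sq_pos hr.1.le (hr.2.trans hR1)
    have h1 : 0 < u r := by
      by_contra! h
      exact absurd (hRmin ⟨⟨hr.1.le, (hr.2.trans hR1).le⟩, h⟩) (not_le.mpr hr.2)
    have h2 : K < v r * (1 - r ^ 2) ^ p := by simpa [u] using h1
    have h3 := Real.rpow_pos_of_pos hs (-p)
    have h4 := hmul r hs
    calc K * (1 - r ^ 2) ^ (-p) ≤ v r * (1 - r ^ 2) ^ p * (1 - r ^ 2) ^ (-p) :=
          mul_le_mul_of_nonneg_right h2.le h3.le
      _ = v r * ((1 - r ^ 2) ^ (-p) * (1 - r ^ 2) ^ p) := by ring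
      _ = v r := by rw [h4, mul_one]
  -- `φ r = r ^ m * (v' r - w' r)`, the weighted flux of `v - w`.
  let φ : ℝ → ℝ := fun r =>
    r ^ m * v' r - 2 * p * K * (r ^ (m + 1) * (1 - r ^ 2) ^ (-(p + 1)))
  have hcw : ∀ q : ℝ, ContinuousOn (fun r : ℝ => (1 - r ^ 2) ^ (-q)) (Icc 0 R) := fun q r hr =>
    (hasDerivAt_barrier_power q
      (one_sub_sq_pos hr.1 (hr.2.trans_lt hR1))).continuousAt.continuousWithinAt
  have hφc : ContinuousOn φ (Icc 0 R) := by
    refine ContinuousOn.sub ?_ (continuousOn_const.mul ?_)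
    · exact (continuousOn_id.pow m).mul (hv'c.mono hsub)
    · exact (continuousOn_id.pow (m + 1)).mul (hcw _)
  have hφ : MonotoneOn φ (Icc 0 R) := by
    refine monotoneOn_of_hasDerivWithinAt_nonneg (convex_Icc 0 R) hφc
      (f' := fun r => ((m : ℝ) * r ^ (m - 1)) * v' r + r ^ m * v'' r -
        2 * p * K * (((m + 1 : ℝ) * r ^ m) * (1 - r ^ 2) ^ (-(p + 1))
      + r ^ (m + 1) * (2 * (p + 1) * r * (1 - r ^ 2) ^ (-(p + 1) - 1)))) ?_ ?_
    · intro r hr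
      rw [interior_Icc] at hr
      have hr1 : r < 1 := hr.2.trans hR1
      have d1 := (hasDerivAt_pow m r).mul (hv' r ⟨hr.1, hr1⟩)
      have d2 := ((hasDerivAt_pow (m + 1) r).mul
        (hasDerivAt_barrier_power (p + 1) (one_sub_sq_pos hr.1.le hr1))).const_mul (2 * p * K)
      have d3 := d1.sub d2
      simp only [Nat.cast_add, Nat.cast_one, Nat.add_sub_cancel] at d3
      exact d3.hasDerivWithinAt
    · intro r hr
      rw [interior_Icc] at hr
      have hr0 := hr.1
      have hr1 : r < 1 := hr.2.trans hR1
      have hs := one_sub_sq_pos hr.1.le hr1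
      have hsup := barrier_super (m := m) hp hpε hK hKε hr.1 hr1
      have hw0 : 0 ≤ K * (1 - r ^ 2) ^ (-p) := by positivity
      have hvr := hv0 r ⟨hr.1.le, hr1.le⟩
      have h1 : δ * (K * (1 - r ^ 2) ^ (-p)) ^ (1 + ε) ≤ F (v r) :=
        (mul_le_mul_of_nonneg_left
          (Real.rpow_le_rpow hw0 (hbelow r hr) (by linarith)) hδ.le).trans (hFlow _ hvr)
      have h2 := mul_le_mul_of_nonneg_left h1 (pow_nonneg hr0.le m)
      have h3 : ((m : ℝ) * r ^ (m - 1)) * v' r + r ^ m * v'' r = r ^ m * F (v r) := by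
        rw [← hode r ⟨hr0, hr1⟩]
        obtain ⟨k, rfl⟩ : ∃ k, m = k + 1 := ⟨m - 1, by omega⟩
        simp only [Nat.add_sub_cancel]
        push_cast
        field_simp
        ring
      linarith
  have hφ0 : φ 0 = 0 := by simp [φ, hv'0]
  have hslope : ∀ r ∈ Ioo 0 R, 0 ≤ v' r - K * (2 * p * r * (1 - r ^ 2) ^ (-p - 1)) := by
    intro r hr
    have h1 : 0 ≤ φ r := hφ0 ▸ hφ ⟨le_rfl, hR0.le⟩ ⟨hr.1.le, hr.2.le⟩ hr.1.le
    have h2 : φ r = r ^ m * (v' r - K * (2 * p * r * (1 - r ^ 2) ^ (-p - 1))) := by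
      have : -(p + 1) = -p - 1 := by ring
      simp only [φ, this]
      ring
    rw [h2] at h1
    exact nonneg_of_mul_nonneg_right h1 (pow_pos hr.1 m)
  have hg : MonotoneOn (fun r => v r - K * (1 - r ^ 2) ^ (-p)) (Icc 0 R) := by
    refine monotoneOn_of_hasDerivWithinAt_nonneg (convex_Icc 0 R)
      ((hvc.mono hsub).sub (continuousOn_const.mul (hcw p)))
      (f' := fun r => v' r - K * (2 * p * r * (1 - r ^ 2) ^ (-p - 1))) ?_ ?_
    · intro r hr
      rw [interior_Icc] at hr ⊢
      have hr1 : r < 1 := hr.2.trans hR1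
      have d1 := (hv r ⟨hr.1.le, hr1.le⟩).mono (Ioo_subset_Icc_self.trans hsub)
      exact d1.sub ((hasDerivAt_barrier_power p
        (one_sub_sq_pos hr.1.le hr1)).const_mul K).hasDerivWithinAt
    · intro r hr
      rw [interior_Icc] at hr
      exact hslope r hr
  have hfin := hg ⟨le_rfl, hR0.le⟩ ⟨hR0.le, le_rfl⟩ hR0.le
  have hs := one_sub_sq_pos hR0.le hR1
  have huR' : v R * (1 - R ^ 2) ^ p ≤ K := by
    have : u R ≤ 0 := huR
    simpa [u] using this
  have h5 : v R ≤ K * (1 - R ^ 2) ^ (-p) := by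
    calc v R = v R * (1 - R ^ 2) ^ p * (1 - R ^ 2) ^ (-p) := by
          rw [mul_assoc, mul_comm ((1 - R ^ 2) ^ p), hmul R hs, mul_one]
      _ ≤ _ := mul_le_mul_of_nonneg_right huR' (Real.rpow_nonneg hs.le _)
  have h6 : v 0 - K ≤ v R - K * (1 - R ^ 2) ^ (-p) := by simpa using hfin
  linarith
end

section
/- Let n ≥ 2 be an integer and let F : ℝ → ℝ be continuous and nondecreasing with F(0) = 0. Let v : [0,1] → ℝ be continuously differentiable on [0,1] and twice continuously differentiable on (0,1), with v'(0) = 0, v''(r) + ((n−1)/r) v'(r) = F(v(r)) for all r ∈ (0,1), v(r) ≥ 0 for all r ∈ [0,1], and v'(r) ≥ 0 for all r ∈ [0,1]. Then for every r ∈ (0,1) one has 0 ≤ v'(r) ≤ √2 · √(v(r)) · √(F(v(r))). -/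
/-!
Fix `R ∈ (0,1)` and let `c = F (v R)`. Since `v' ≥ 0`, `v` is nondecreasing, so `F (v r) ≤ c` for
`r ≤ R`. Hence the energy `E r = (v' r)² - 2 c (v r)` has derivative
`2 v' (v'' - c) ≤ 2 v' (F (v r) - c) ≤ 0` on `(0,R)`, the term `((n-1)/r) v'` being nonnegative.
So `E R ≤ E 0 = -2 c (v 0) ≤ 0`, that is `(v' R)² ≤ 2 (v R) (F (v R))`. Freezing `F` at its largest
value `c` replaces the primitive `G` of `F` together with the bound `G μ ≤ μ F μ`.
-/

open Set

theorem stmt_5 (n : ℕ) (hn : 2 ≤ n)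
    (F : ℝ → ℝ) (hF : Continuous F) (hFmono : Monotone F) (hF0 : F 0 = 0)
    (v v' v'' : ℝ → ℝ)
    (hderiv1 : ∀ r ∈ Icc (0:ℝ) 1, HasDerivWithinAt v (v' r) (Icc (0:ℝ) 1) r)
    (hcont1 : ContinuousOn v' (Icc (0:ℝ) 1))
    (hderiv2 : ∀ r ∈ Ioo (0:ℝ) 1, HasDerivAt v' (v'' r) r)
    (hcont2 : ContinuousOn v'' (Ioo (0:ℝ) 1))
    (hv'0 : v' 0 = 0)
    (hODE : ∀ r ∈ Ioo (0:ℝ) 1, v'' r + (((n : ℝ) - 1) / r) * v' r = F (v r))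
    (hvpos : ∀ r ∈ Icc (0:ℝ) 1, 0 ≤ v r)
    (hv'pos : ∀ r ∈ Icc (0:ℝ) 1, 0 ≤ v' r) :
    ∀ r ∈ Ioo (0:ℝ) 1,
      0 ≤ v' r ∧ v' r ≤ Real.sqrt 2 * Real.sqrt (v r) * Real.sqrt (F (v r)) := by
  intro R hR
  have hR' : R ∈ Icc (0:ℝ) 1 := Ioo_subset_Icc_self hR
  have h0 : (0:ℝ) ∈ Icc (0:ℝ) 1 := ⟨le_rfl, zero_le_one⟩
  refine ⟨hv'pos R hR', ?_⟩
  have hvcont : ContinuousOn v (Icc (0:ℝ) 1) := fun r hr => (hderiv1 r hr).continuousWithinAt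
  have hvd : ∀ r ∈ Ioo (0:ℝ) 1, HasDerivAt v (v' r) r := fun r hr =>
    (hderiv1 r (Ioo_subset_Icc_self hr)).hasDerivAt (Icc_mem_nhds hr.1 hr.2)
  have hvmono : MonotoneOn v (Icc (0:ℝ) 1) := by
    refine monotoneOn_of_hasDerivWithinAt_nonneg (f' := v') (convex_Icc 0 1) hvcont ?_ ?_
    · rw [interior_Icc]
      exact fun r hr => (hvd r hr).hasDerivWithinAt
    · rw [interior_Icc]
      exact fun r hr => hv'pos r (Ioo_subset_Icc_self hr)
  have hsub : Icc 0 R ⊆ Icc (0:ℝ) 1 := Icc_subset_Icc_right hR'.2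
  have hE : AntitoneOn (fun r => v' r ^ 2 - 2 * F (v R) * v r) (Icc 0 R) := by
    refine antitoneOn_of_hasDerivWithinAt_nonpos
      (f' := fun r => 2 * v' r * v'' r - 2 * F (v R) * v' r) (convex_Icc 0 R) ?_ ?_ ?_
    · exact ((hcont1.mono hsub).pow 2).sub (continuousOn_const.mul (hvcont.mono hsub))
    · rw [interior_Icc]
      intro r hr
      have hr1 : r ∈ Ioo (0:ℝ) 1 := ⟨hr.1, hr.2.trans hR.2⟩
      have h := ((hderiv2 r hr1).pow 2).sub ((hvd r hr1).const_mul (2 * F (v R)))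
      refine (h.congr_deriv ?_).hasDerivWithinAt
      norm_num
    · rw [interior_Icc]
      intro r hr
      have hr1 : r ∈ Ioo (0:ℝ) 1 := ⟨hr.1, hr.2.trans hR.2⟩
      have hv'r := hv'pos r (Ioo_subset_Icc_self hr1)
      have hFr : F (v r) ≤ F (v R) :=
        hFmono (hvmono (Ioo_subset_Icc_self hr1) hR' hr.2.le)
      have hn1 : (0:ℝ) ≤ (n : ℝ) - 1 := by
        have : (2:ℝ) ≤ n := by exact_mod_cast hn
        linarith
      have hfric : 0 ≤ (((n : ℝ) - 1) / r) * v' r := mul_nonneg (div_nonneg hn1 hr.1.le) hv'r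
      have hode := hODE r hr1
      have hle : v'' r - F (v R) ≤ 0 := by linarith
      nlinarith [mul_nonpos_of_nonneg_of_nonpos hv'r hle]
  have hER := hE ⟨le_rfl, hR'.1⟩ ⟨hR'.1, le_rfl⟩ hR'.1
  have hFR : 0 ≤ F (v R) := hF0 ▸ hFmono (hvpos R hR')
  have hv0 : 0 ≤ F (v R) * v 0 := mul_nonneg hFR (hvpos 0 h0)
  simp only [hv'0] at hER
  rw [← Real.sqrt_mul zero_le_two, ← Real.sqrt_mul (mul_nonneg zero_le_two (hvpos R hR'))]
  apply Real.le_sqrt_of_sq_le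
  linarith
end

section
/- Let n ≥ 2 be an integer and let F : ℝ → ℝ be continuous with F(μ) ≥ 0 for μ ≥ 0. Let μ₀ > 0 be such that F(μ) ≥ 32 (n−1)² μ for all μ ≥ μ₀. Let v : [0,1] → ℝ be continuously differentiable on [0,1] and twice continuously differentiable on (0,1), satisfying v''(r) + ((n−1)/r) v'(r) = F(v(r)) for all r ∈ (0,1), v(r) ≥ μ₀ for all r ∈ [0,1], and 0 ≤ v'(r) ≤ √2 · √(v(r)) · √(F(v(r))) for all r ∈ (0,1). Then v''(r) ≥ (1/2) F(v(r)) for all r ∈ [1/2, 1). -/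
/-!
By the equation, the claim says that the damping term `((n - 1) / r) * v'` is at most `F (v) / 2`.
For `r ≥ 1/2` it is at most `2 (n - 1) √2 √v √(F v)` by the gradient bound, and the growth
hypothesis `32 (n - 1)² v ≤ F v` is exactly the square of `4 (n - 1) √2 √v ≤ √(F v)`.
-/

open Set

theorem stmt_6 (n : ℕ) (hn : 2 ≤ n)
    (F : ℝ → ℝ) (hF : Continuous F)
    (hFnonneg : ∀ μ : ℝ, 0 ≤ μ → 0 ≤ F μ)
    (μ₀ : ℝ) (hμ₀ : 0 < μ₀)
    (hFgrow : ∀ μ : ℝ, μ₀ ≤ μ → 32 * ((n : ℝ) - 1) ^ 2 * μ ≤ F μ)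
    (v v' v'' : ℝ → ℝ)
    (hderiv1 : ∀ r ∈ Icc (0:ℝ) 1, HasDerivWithinAt v (v' r) (Icc (0:ℝ) 1) r)
    (hcont1 : ContinuousOn v' (Icc (0:ℝ) 1))
    (hderiv2 : ∀ r ∈ Ioo (0:ℝ) 1, HasDerivAt v' (v'' r) r)
    (hcont2 : ContinuousOn v'' (Ioo (0:ℝ) 1))
    (hODE : ∀ r ∈ Ioo (0:ℝ) 1, v'' r + (((n : ℝ) - 1) / r) * v' r = F (v r))
    (hvμ₀ : ∀ r ∈ Icc (0:ℝ) 1, μ₀ ≤ v r)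
    (hv'bound : ∀ r ∈ Ioo (0:ℝ) 1,
      0 ≤ v' r ∧ v' r ≤ Real.sqrt 2 * Real.sqrt (v r) * Real.sqrt (F (v r))) :
    ∀ r ∈ Ico (1/2 : ℝ) 1, (1/2 : ℝ) * F (v r) ≤ v'' r := by
  intro r hr
  have hr0 : (0 : ℝ) < r := by linarith [hr.1]
  have hrI : r ∈ Ioo (0 : ℝ) 1 := ⟨hr0, hr.2⟩
  have hv := hvμ₀ r ⟨hr0.le, hr.2.le⟩
  have hgrow := hFgrow _ hv
  obtain ⟨hv'0, hv'1⟩ := hv'bound r hrI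
  have hode := hODE r hrI
  have hv0 : 0 ≤ v r := by linarith
  have hF0 := hFnonneg _ hv0
  have hn1 : (0 : ℝ) ≤ (n : ℝ) - 1 := by
    have : (2 : ℝ) ≤ n := by exact_mod_cast hn
    linarith
  -- the growth hypothesis on `F`, after taking square roots
  have hroot : 4 * ((n : ℝ) - 1) * (Real.sqrt 2 * Real.sqrt (v r)) ≤ Real.sqrt (F (v r)) := by
    apply Real.le_sqrt_of_sq_le
    have h : (4 * ((n : ℝ) - 1) * (Real.sqrt 2 * Real.sqrt (v r))) ^ 2
        = 32 * ((n : ℝ) - 1) ^ 2 * v r := by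
      rw [mul_pow, mul_pow (Real.sqrt 2), Real.sq_sqrt (by norm_num), Real.sq_sqrt hv0]
      ring
    rw [h]
    exact hgrow
  have hdiv : ((n : ℝ) - 1) / r ≤ 2 * ((n : ℝ) - 1) := by
    rw [div_le_iff₀ hr0]
    nlinarith [hr.1]
  have hdamp : ((n : ℝ) - 1) / r * v' r ≤ 1 / 2 * F (v r) := by
    calc ((n : ℝ) - 1) / r * v' r
        ≤ 2 * ((n : ℝ) - 1) * (Real.sqrt 2 * Real.sqrt (v r) * Real.sqrt (F (v r))) :=
          mul_le_mul hdiv hv'1 hv'0 (by linarith)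
      _ = 1 / 2 * (4 * ((n : ℝ) - 1) * (Real.sqrt 2 * Real.sqrt (v r)) * Real.sqrt (F (v r))) := by
          ring
      _ ≤ 1 / 2 * (Real.sqrt (F (v r)) * Real.sqrt (F (v r))) := by gcongr
      _ = 1 / 2 * F (v r) := by rw [Real.mul_self_sqrt hF0]
  linarith
end

section
/- Let δ, ε > 0 and let w : [1/2, 1) → ℝ be continuously differentiable on [1/2, 1) and twice continuously differentiable on (1/2, 1), with w(r) > 0 and w'(r) ≥ 0 for all r ∈ [1/2, 1), and w''(r) ≥ (δ/2) w(r)^{1+ε} for all r ∈ (1/2, 1). Then for every r ∈ (1/2, 1) one has w'(r)² ≥ (δ/(2+ε)) ( w(r)^{2+ε} − w(1/2)^{2+ε} ). -/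
/-!
The energy `(w')² - (δ/(2+ε)) w^(2+ε)` has derivative `2 w' (w'' - (δ/2) w^(1+ε)) ≥ 0` on
`(1/2, 1)` and is continuous up to `1/2`, so it is monotone on `[1/2, 1)`. Comparing its values
at `1/2` and `r`, and discarding the nonnegative term `w'(1/2)²`, gives the inequality.
-/

open Set

theorem stmt_7 (δ ε : ℝ) (hδ : 0 < δ) (hε : 0 < ε)
    (w w' w'' : ℝ → ℝ)
    (hderiv1 : ∀ r ∈ Ico (1/2 : ℝ) 1, HasDerivWithinAt w (w' r) (Ico (1/2 : ℝ) 1) r)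
    (hcont1 : ContinuousOn w' (Ico (1/2 : ℝ) 1))
    (hderiv2 : ∀ r ∈ Ioo (1/2 : ℝ) 1, HasDerivAt w' (w'' r) r)
    (hcont2 : ContinuousOn w'' (Ioo (1/2 : ℝ) 1))
    (hwpos : ∀ r ∈ Ico (1/2 : ℝ) 1, 0 < w r)
    (hw'nonneg : ∀ r ∈ Ico (1/2 : ℝ) 1, 0 ≤ w' r)
    (hw'' : ∀ r ∈ Ioo (1/2 : ℝ) 1, (δ / 2) * w r ^ (1 + ε) ≤ w'' r) :
    ∀ r ∈ Ioo (1/2 : ℝ) 1,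
      (δ / (2 + ε)) * (w r ^ (2 + ε) - w (1/2 : ℝ) ^ (2 + ε)) ≤ (w' r) ^ 2 := by
  have hmono : MonotoneOn (fun x => (w' x) ^ 2 - (δ / (2 + ε)) * w x ^ (2 + ε))
      (Ico (1/2 : ℝ) 1) := by
    have hcw : ContinuousOn w (Ico (1/2 : ℝ) 1) := fun x hx => (hderiv1 x hx).continuousWithinAt
    refine monotoneOn_of_hasDerivWithinAt_nonneg (convex_Ico _ _)
      (f' := fun x => 2 * w' x * w'' x - δ * (w' x * w x ^ (1 + ε))) ?_ ?_ ?_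
    · exact (hcont1.pow 2).sub (continuousOn_const.mul
        (hcw.rpow_const fun x hx => Or.inl (hwpos x hx).ne'))
    · intro x hx
      rw [interior_Ico] at hx ⊢
      have hx' := Ioo_subset_Ico_self hx
      have h1 : HasDerivAt w (w' x) x := (hderiv1 x hx').hasDerivAt (Ico_mem_nhds hx.1 hx.2)
      have h2 := ((hderiv2 x hx).pow 2).sub
        ((h1.rpow_const (p := 2 + ε) (Or.inl (hwpos x hx').ne')).const_mul (δ / (2 + ε)))
      refine (h2.congr_deriv ?_).hasDerivWithinAt
      rw [show 2 + ε - 1 = 1 + ε by ring]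
      have : 2 + ε ≠ 0 := by positivity
      field_simp
      norm_num
      ring
    · intro x hx
      rw [interior_Ico] at hx
      nlinarith [mul_le_mul_of_nonneg_left (hw'' x hx) (hw'nonneg x (Ioo_subset_Ico_self hx))]
  intro r hr
  have h := hmono (left_mem_Ico.2 (by norm_num)) (Ioo_subset_Ico_self hr) hr.1.le
  simp only at h
  nlinarith [sq_nonneg (w' (1/2))]
end

section
/- Let n ≥ 2, let B ⊂ ℝⁿ be a closed ball with interior B° and boundary sphere ∂B. Let a : B × ℝ → ℝ be C² with ∂_μ a(x,μ) ≥ 0 for all (x,μ) ∈ B × ℝ. Let u, w : B → ℝ be continuous on B and twice continuously differentiable on B°, with −Δu(x) + a(x,u(x)) = 0 and −Δw(x) + a(x,w(x)) = 0 for all x ∈ B°, and u(x) ≤ w(x) for all x ∈ ∂B. Then u(x) ≤ w(x) for all x ∈ B; in particular, if |u| ≤ λ on ∂B and u₋, u₊ are the solutions with constant boundary values −λ and +λ respectively, then u₋ ≤ u ≤ u₊ on B. -/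
/-!
Weak maximum principle by a quadratic perturbation. If `u - w` equals `m > 0` somewhere in the
closed ball, choose `ε > 0` with `ε R² < m`; then `u - w + ε (‖· - x₀‖² - R²)` is positive at that
point and nonpositive on the sphere, so it has an interior maximum `z`, where `u z > w z`.
At `z` every pure second derivative of the perturbed function is nonpositive
(`line_second_deriv_le`), so `Δu z - Δw z + 2 n ε ≤ 0`. The equations and the monotonicity of
`a (z, ·)` give `Δu z - Δw z = a (z, u z) - a (z, w z) ≥ 0`, a contradiction.
The two-sided bound applies this comparison twice.
-/

open Set Metric

open Filter Topology in
/-- Second-order necessary condition at a local maximum: a positive second derivative would make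
the point a local minimum too, hence the function locally constant. -/
lemma second_deriv_nonpos_of_isLocalMax {φ ψ : ℝ → ℝ} {c : ℝ}
    (h1 : ∀ᶠ t in 𝓝 (0 : ℝ), HasDerivAt φ (ψ t) t) (h2 : HasDerivAt ψ c 0)
    (hmax : IsLocalMax φ 0) : c ≤ 0 := by
  by_contra! hc
  have he : deriv φ =ᶠ[𝓝 0] ψ := h1.mono fun t ht => ht.deriv
  have hdd : deriv (deriv φ) 0 = c := by rw [he.deriv_eq, h2.deriv]
  have hmin : IsLocalMin φ 0 :=
    isLocalMin_of_deriv_deriv_pos (by rw [hdd]; exact hc) hmax.deriv_eq_zero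
      h1.self_of_nhds.continuousAt
  have hconst : φ =ᶠ[𝓝 0] fun _ => φ 0 := by
    filter_upwards [hmax, hmin] with t h h' using le_antisymm h h'
  have h0 : deriv (deriv φ) 0 = 0 := by
    rw [hconst.deriv.deriv_eq]
    simp
  linarith

open Filter Topology in
/-- First and second derivatives of a `C²` function along a line, in terms of the iterated
directional derivatives that make up `lap`. -/
lemma line_derivs {E : Type*} [NormedAddCommGroup E] [NormedSpace ℝ E] {u : E → ℝ}
    {z : E} (e : E) (hu : ContDiffAt ℝ 2 u z) :
    (∀ᶠ t in 𝓝 (0 : ℝ), HasDerivAt (fun t : ℝ => u (z + t • e)) (fderiv ℝ u (z + t • e) e) t) ∧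
    HasDerivAt (fun t : ℝ => fderiv ℝ u (z + t • e) e)
      (fderiv ℝ (fun y => fderiv ℝ u y e) z e) 0 := by
  have hline (t : ℝ) : HasDerivAt (fun t : ℝ => z + t • e) e t := by
    simpa using ((hasDerivAt_id t).smul_const e).const_add z
  have hz : z + (0 : ℝ) • e = z := by simp
  constructor
  · have hev : ∀ᶠ y in 𝓝 z, DifferentiableAt ℝ u y :=
      (hu.eventually (by simp)).mono fun y hy => hy.differentiableAt (by norm_num)
    have htend : Tendsto (fun t : ℝ => z + t • e) (𝓝 0) (𝓝 z) := by
      simpa only [hz] using (hline 0).continuousAt.tendsto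
    filter_upwards [htend.eventually hev] with t ht
    exact ht.hasFDerivAt.comp_hasDerivAt t (hline t)
  · have hd : DifferentiableAt ℝ (fun y => fderiv ℝ u y e) z :=
      ((hu.fderiv_right (m := 1) (by norm_num)).differentiableAt (by norm_num)).clm_apply
        (differentiableAt_const e)
    have hd' : HasFDerivAt (fun y => fderiv ℝ u y e) (fderiv ℝ (fun y => fderiv ℝ u y e) z)
        (z + (0 : ℝ) • e) := by
      rw [hz]; exact hd.hasFDerivAt
    exact hd'.comp_hasDerivAt 0 (hline 0)

open Filter Topology in
/-- At a local maximum of `u - w + ε (‖· - x₀‖² - C)`, the second derivative in any unit direction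
is nonpositive; the quadratic term contributes `2 ε`. -/
lemma line_second_deriv_le {E : Type*} [NormedAddCommGroup E] [InnerProductSpace ℝ E]
    {u w : E → ℝ} {z x₀ e : E} {ε C : ℝ} (he : ‖e‖ = 1)
    (hu : ContDiffAt ℝ 2 u z) (hw : ContDiffAt ℝ 2 w z)
    (hmax : IsLocalMax (fun x => u x - w x + ε * (‖x - x₀‖ ^ 2 - C)) z) :
    fderiv ℝ (fun y => fderiv ℝ u y e) z e - fderiv ℝ (fun y => fderiv ℝ w y e) z e + 2 * ε
      ≤ 0 := by
  obtain ⟨hu1, hu2⟩ := line_derivs e hu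
  obtain ⟨hw1, hw2⟩ := line_derivs e hw
  have hq (t : ℝ) : ‖z + t • e - x₀‖ ^ 2
      = ‖z - x₀‖ ^ 2 + 2 * inner ℝ (z - x₀) e * t + t ^ 2 := by
    rw [add_sub_right_comm, norm_add_sq_real, inner_smul_right, norm_smul, he]
    simp
    ring
  have hq1 (t : ℝ) : HasDerivAt (fun t : ℝ => ε * (‖z + t • e - x₀‖ ^ 2 - C))
      (ε * (2 * inner ℝ (z - x₀) e + 2 * t)) t := by
    simp only [hq]
    have h1 := ((hasDerivAt_id t).const_mul (2 * inner ℝ (z - x₀) e)).const_add (‖z - x₀‖ ^ 2)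
    have h2 := ((h1.add (hasDerivAt_pow 2 t)).sub_const C).const_mul ε
    simpa using h2
  have hq2 : HasDerivAt (fun t : ℝ => ε * (2 * inner ℝ (z - x₀) e + 2 * t)) (2 * ε) 0 := by
    have h := ((((hasDerivAt_id (0 : ℝ)).const_mul 2).const_add (2 * inner ℝ (z - x₀) e))).const_mul ε
    simpa [mul_comm] using h
  have hz : z + (0 : ℝ) • e = z := by simp
  have hcont : ContinuousAt (fun t : ℝ => z + t • e) 0 := by fun_prop
  refine second_deriv_nonpos_of_isLocalMax
    (φ := fun t : ℝ => u (z + t • e) - w (z + t • e) + ε * (‖z + t • e - x₀‖ ^ 2 - C))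
    ?_ ((hu2.sub hw2).add hq2) ?_
  · filter_upwards [hu1, hw1] with t h h'
    exact (h.sub h').add (hq1 t)
  · have htend : Tendsto (fun t : ℝ => z + t • e) (𝓝 0) (𝓝 z) := by
      simpa only [hz] using hcont.tendsto
    filter_upwards [htend.eventually hmax] with t ht
    simpa only [hz] using ht

/-- The comparison principle, with the dependence on `a` reduced to `a (x, ·)` being monotone. -/
lemma comparison {n : ℕ} (hn : 2 ≤ n) {x₀ : EuclideanSpace ℝ (Fin n)} {R : ℝ}
    {a : EuclideanSpace ℝ (Fin n) × ℝ → ℝ}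
    (hmono : ∀ x ∈ closedBall x₀ R, Monotone fun t => a (x, t))
    {u w : EuclideanSpace ℝ (Fin n) → ℝ}
    (huc : ContinuousOn u (closedBall x₀ R)) (hu : ContDiffOn ℝ 2 u (ball x₀ R))
    (hwc : ContinuousOn w (closedBall x₀ R)) (hw : ContDiffOn ℝ 2 w (ball x₀ R))
    (hue : ∀ x ∈ ball x₀ R, -lap u x + a (x, u x) = 0)
    (hwe : ∀ x ∈ ball x₀ R, -lap w x + a (x, w x) = 0)
    (hb : ∀ x ∈ sphere x₀ R, u x ≤ w x) :
    ∀ x ∈ closedBall x₀ R, u x ≤ w x := by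
  intro x₁ hx₁
  by_contra! hlt
  -- `m / (R² + 1)` keeps `ε R² < m` without dividing by `R`.
  obtain ⟨ε, hε, hεR⟩ : ∃ ε : ℝ, 0 < ε ∧ ε * R ^ 2 < u x₁ - w x₁ := by
    have hm : 0 < u x₁ - w x₁ := sub_pos.2 hlt
    refine ⟨(u x₁ - w x₁) / (R ^ 2 + 1), by positivity, ?_⟩
    rw [div_mul_eq_mul_div, div_lt_iff₀ (by positivity)]
    nlinarith
  set g : EuclideanSpace ℝ (Fin n) → ℝ := fun x => u x - w x + ε * (‖x - x₀‖ ^ 2 - R ^ 2) with hg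
  have hgc : ContinuousOn g (closedBall x₀ R) := (huc.sub hwc).add (by fun_prop)
  obtain ⟨z, hz, hzmax⟩ := (isCompact_closedBall x₀ R).exists_isMaxOn ⟨x₁, hx₁⟩ hgc
  have hgz : 0 < g z := by
    have h1 : g x₁ ≤ g z := hzmax hx₁
    have h2 : 0 ≤ ε * ‖x₁ - x₀‖ ^ 2 := by positivity
    simp only [hg] at h1 ⊢
    linarith
  have hzle : ‖z - x₀‖ ≤ R := by simpa [dist_eq_norm] using hz
  have hwu : w z < u z := by
    have h1 : ‖z - x₀‖ ^ 2 ≤ R ^ 2 := by gcongr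
    have h2 : ε * (‖z - x₀‖ ^ 2 - R ^ 2) ≤ 0 :=
      mul_nonpos_of_nonneg_of_nonpos hε.le (by linarith)
    simp only [hg] at hgz
    linarith
  have hzb : z ∈ ball x₀ R := by
    rcases (mem_closedBall.1 hz).lt_or_eq with h | h
    · exact h
    · exact absurd (hb z h) (not_le.2 hwu)
  have hnhds := isOpen_ball.mem_nhds hzb
  have hloc : IsLocalMax g z := hzmax.isLocalMax (Filter.mem_of_superset hnhds ball_subset_closedBall)
  have hsum : lap u z - lap w z + n * (2 * ε) ≤ 0 := by
    have h := Finset.sum_nonpos fun (i : Fin n) (_ : i ∈ Finset.univ) =>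
      line_second_deriv_le (e := EuclideanSpace.single i (1 : ℝ)) (by simp)
        (hu.contDiffAt hnhds) (hw.contDiffAt hnhds) hloc
    simpa [lap, Finset.sum_add_distrib, Finset.sum_sub_distrib] using h
  have hnε : 0 < (n : ℝ) * (2 * ε) := by
    have : 0 < (n : ℝ) := by exact_mod_cast (by omega : 0 < n)
    positivity
  have ha : a (z, w z) ≤ a (z, u z) := hmono z hz hwu.le
  linarith [hue z hzb, hwe z hzb]

theorem stmt_13 (n : ℕ) (hn : 2 ≤ n) (x₀ : EuclideanSpace ℝ (Fin n)) (R : ℝ) (hR : 0 < R)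
    (a : EuclideanSpace ℝ (Fin n) × ℝ → ℝ)
    (ha : ContDiffOn ℝ 2 a (closedBall x₀ R ×ˢ (univ : Set ℝ)))
    (hamono : ∀ x ∈ closedBall x₀ R, ∀ μ : ℝ, 0 ≤ deriv (fun t => a (x, t)) μ) :
    (∀ u w : EuclideanSpace ℝ (Fin n) → ℝ,
      ContinuousOn u (closedBall x₀ R) → ContDiffOn ℝ 2 u (ball x₀ R) →
      ContinuousOn w (closedBall x₀ R) → ContDiffOn ℝ 2 w (ball x₀ R) →
      (∀ x ∈ ball x₀ R, -lap u x + a (x, u x) = 0) →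
      (∀ x ∈ ball x₀ R, -lap w x + a (x, w x) = 0) →
      (∀ x ∈ sphere x₀ R, u x ≤ w x) →
      ∀ x ∈ closedBall x₀ R, u x ≤ w x) ∧
    (∀ (lam : ℝ) (u um up : EuclideanSpace ℝ (Fin n) → ℝ),
      ContinuousOn u (closedBall x₀ R) → ContDiffOn ℝ 2 u (ball x₀ R) →
      ContinuousOn um (closedBall x₀ R) → ContDiffOn ℝ 2 um (ball x₀ R) →
      ContinuousOn up (closedBall x₀ R) → ContDiffOn ℝ 2 up (ball x₀ R) →
      (∀ x ∈ ball x₀ R, -lap u x + a (x, u x) = 0) →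
      (∀ x ∈ ball x₀ R, -lap um x + a (x, um x) = 0) →
      (∀ x ∈ ball x₀ R, -lap up x + a (x, up x) = 0) →
      (∀ x ∈ sphere x₀ R, |u x| ≤ lam) →
      (∀ x ∈ sphere x₀ R, um x = -lam) →
      (∀ x ∈ sphere x₀ R, up x = lam) →
      ∀ x ∈ closedBall x₀ R, um x ≤ u x ∧ u x ≤ up x) := by
  have hmono : ∀ x ∈ closedBall x₀ R, Monotone fun t => a (x, t) := by
    intro x hx
    refine monotone_of_deriv_nonneg ?_ (hamono x hx)
    have hc : ContDiff ℝ 2 fun t : ℝ => (x, t) := by fun_prop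
    have h : ContDiff ℝ 2 fun t => a (x, t) :=
      ha.comp_contDiff hc fun t => ⟨hx, mem_univ t⟩
    exact h.differentiable (by norm_num)
  refine ⟨fun u w huc hu hwc hw hue hwe hb => comparison hn hmono huc hu hwc hw hue hwe hb, ?_⟩
  intro lam u um up huc hu hmc hm hpc hp hue hme hpe hb hbm hbp x hx
  refine ⟨comparison hn hmono hmc hm huc hu hme hue (fun y hy => ?_) x hx,
    comparison hn hmono huc hu hpc hp hue hpe (fun y hy => ?_) x hx⟩
  · rw [hbm y hy]
    exact (abs_le.1 (hb y hy)).1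
  · rw [hbp y hy]
    exact (abs_le.1 (hb y hy)).2
end

section
/- Let n ≥ 2 and let M ⊂ ℝⁿ be a nonempty bounded open connected set with closure M̄. Then there exist two C² functions a₁, a₂ : M̄ × ℝ → ℝ with a₁ ≠ a₂, both satisfying a_j(x,0) = 0 and ∂_μ a_j(x,μ) ≥ 0 for all (x,μ) ∈ M̄ × ℝ (j = 1,2), such that for every function u : M̄ → ℝ that is continuous on M̄ and twice continuously differentiable on M, u satisfies −Δu(x) + a₁(x,u(x)) = 0 for all x ∈ M if and only if u satisfies −Δu(x) + a₂(x,u(x)) = 0 for all x ∈ M. In particular, the two semilinear equations have identical sets of classical solutions, and hence identical Dirichlet-to-Neumann data, even though a₁ ≠ a₂. -/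
/-!
The proof rests on a Keller–Osserman type interior bound. Let `ρ(x) = R² - |x - x₀|²` on a closed
ball `closedBall x₀ R ⊆ M`. If `u` is `C²` and `Δu ≥ u³` wherever `u > 0`, then
`ρ u ≤ C := (2n + 8) R` on the ball, whatever the boundary values of `u` are. Indeed, at a positive
interior maximum `y` of `ρ u` the first and second order conditions along each coordinate line give
`ρ² u_ii ≤ u (2 ρ + 8 (y - x₀)_i²)`; summing yields `ρ² Δu ≤ u (2 n ρ + 8 |y - x₀|²) ≤ (2n + 8) R² u`,
so `(ρ u)² ≤ (2n + 8) R² ≤ C²`.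

Consequently `u ≤ 2 C / R²` on `ball x₀ (R / 2)`. Take `a₁(x, μ) = μ³` and
`a₂(x, μ) = μ³ + φ(x) g(μ)`, with `φ ≥ 0` a bump supported in `ball x₀ (R / 2)` and `g ≥ 0` a smooth
monotone function that vanishes exactly on `μ ≤ 2 C / R²`. A solution of either equation satisfies
`Δu ≥ u³`, hence the bound, hence the added term vanishes along it. The lemmas carrying this are
`second_deriv_nonpos_of_isLocalMax`, `coordinate_bound` and `keller_osserman`.
-/

open Set Metric

/-- Second order necessary condition at a local maximum. -/
lemma second_deriv_nonpos_of_isLocalMax_s14 {f f' : ℝ → ℝ} {L : ℝ}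
    (hf : ∀ᶠ t in nhds (0 : ℝ), HasDerivAt f (f' t) t) (hf' : HasDerivAt f' L 0)
    (hmax : IsLocalMax f 0) : L ≤ 0 := by
  by_contra! hL
  have hd : deriv f =ᶠ[nhds 0] f' := hf.mono fun t ht => ht.deriv
  have h2 : deriv (deriv f) 0 = L := by rw [hd.deriv_eq]; exact hf'.deriv
  have hmin : IsLocalMin f 0 :=
    isLocalMin_of_deriv_deriv_pos (by rw [h2]; exact hL) hmax.deriv_eq_zero
      hf.self_of_nhds.continuousAt
  -- A point that is both a local maximum and a local minimum makes `f` locally constant.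
  have hc : f =ᶠ[nhds 0] fun _ => f 0 := by
    filter_upwards [hmax, hmin] with t h1 h2 using le_antisymm h1 h2
  have h3 : deriv (deriv f) 0 = 0 := by
    rw [hc.deriv.deriv_eq]; simp
  linarith

/-- The maximum conditions for `(R² - |x - x₀|²) u` along one coordinate line, with the first
derivative of `u` eliminated. -/
lemma coordinate_bound {n : ℕ} {u : EuclideanSpace ℝ (Fin n) → ℝ}
    {x₀ y : EuclideanSpace ℝ (Fin n)} {R : ℝ} (hu : ContDiffAt ℝ 2 u y)
    (hρ : 0 < R ^ 2 - ‖y - x₀‖ ^ 2)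
    (hmax : IsLocalMax (fun x => (R ^ 2 - ‖x - x₀‖ ^ 2) * u x) y) (i : Fin n) :
    (R ^ 2 - ‖y - x₀‖ ^ 2) ^ 2 *
      fderiv ℝ (fun z => fderiv ℝ u z (EuclideanSpace.single i 1)) y (EuclideanSpace.single i 1)
      ≤ u y * (2 * (R ^ 2 - ‖y - x₀‖ ^ 2) + 8 * ((y - x₀) i) ^ 2) := by
  set e : EuclideanSpace ℝ (Fin n) := EuclideanSpace.single i 1 with he
  set ρ := R ^ 2 - ‖y - x₀‖ ^ 2 with hρdef
  set b := (y - x₀) i with hb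
  set D := fderiv ℝ (fun z => fderiv ℝ u z e) y e with hD
  let l : ℝ → EuclideanSpace ℝ (Fin n) := fun t => y + t • e
  have hl : ∀ t, HasDerivAt l e t := fun t => by
    exact (((hasDerivAt_id t).smul_const e).const_add y).congr_deriv (one_smul ℝ e)
  have hl0 : l 0 = y := by simp [l]
  have hlc : Filter.Tendsto l (nhds 0) (nhds y) := by
    have := (hl 0).continuousAt.tendsto
    rwa [hl0] at this
  have hq : ∀ t, R ^ 2 - ‖l t - x₀‖ ^ 2 = ρ - 2 * b * t - t ^ 2 := fun t => by
    have h1 : l t - x₀ = (y - x₀) + t • e := by simp only [l]; abel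
    rw [h1, norm_add_sq_real, inner_smul_right, norm_smul, he, EuclideanSpace.inner_single_right]
    simp only [PiLp.norm_single, hρdef, hb, Real.norm_eq_abs, mul_pow, sq_abs]
    simp
    ring
  have hqd : ∀ t, HasDerivAt (fun t : ℝ => ρ - 2 * b * t - t ^ 2) (-2 * b - 2 * t) t := fun t => by
    have := (((hasDerivAt_id t).const_mul (2 * b)).const_sub ρ).sub (hasDerivAt_pow 2 t)
    refine this.congr_deriv ?_
    simp
  have hqdd : HasDerivAt (fun t : ℝ => -2 * b - 2 * t) (-2) 0 := by
    have := ((hasDerivAt_id (0 : ℝ)).const_mul 2).const_sub (-2 * b)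
    exact this.congr_deriv (by simp)
  have hev : ∀ᶠ z in nhds y, DifferentiableAt ℝ u z := by
    filter_upwards [hu.eventually (by simp)] with z hz using hz.differentiableAt (by norm_num)
  have hud : ∀ᶠ t in nhds (0 : ℝ), HasDerivAt (fun t => u (l t)) (fderiv ℝ u (l t) e) t := by
    filter_upwards [hlc.eventually hev] with t ht
    exact ht.hasFDerivAt.comp_hasDerivAt t (hl t)
  have hdiff : DifferentiableAt ℝ (fun z => fderiv ℝ u z e) y := by
    have h1 : ContDiffAt ℝ 1 (fderiv ℝ u) y := hu.fderiv_right (by norm_num)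
    exact (h1.differentiableAt (by norm_num)).clm_apply (differentiableAt_const e)
  have hudd : HasDerivAt (fun t => fderiv ℝ u (l t) e) D 0 := by
    have h1 : HasFDerivAt (fun z => fderiv ℝ u z e) (fderiv ℝ (fun z => fderiv ℝ u z e) y) (l 0) := by
      rw [hl0]; exact hdiff.hasFDerivAt
    exact h1.comp_hasDerivAt 0 (hl 0)
  have hF : ∀ᶠ t in nhds (0 : ℝ), HasDerivAt (fun t => (ρ - 2 * b * t - t ^ 2) * u (l t))
      ((-2 * b - 2 * t) * u (l t) + (ρ - 2 * b * t - t ^ 2) * fderiv ℝ u (l t) e) t := by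
    filter_upwards [hud] with t ht using (hqd t).mul ht
  have hFF := (hqdd.mul hud.self_of_nhds).add ((hqd 0).mul hudd)
  have hm : IsLocalMax (fun t => (ρ - 2 * b * t - t ^ 2) * u (l t)) 0 := by
    have h1 := hlc.eventually hmax
    filter_upwards [h1] with t ht
    simp only [hq] at ht
    simpa [hl0, hρdef] using ht
  have h1 := hm.hasDerivAt_eq_zero hF.self_of_nhds
  have h2 := second_deriv_nonpos_of_isLocalMax_s14 hF hFF hm
  simp only [hl0] at h1 h2
  set p := fderiv ℝ u y e
  have h1' : ρ * p = 2 * b * u y := by linarith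
  have h2' : ρ * D ≤ 2 * u y + 4 * b * p := by linarith
  have h3 := mul_le_mul_of_nonneg_left h2' hρ.le
  have h4 : b * (ρ * p) = b * (2 * b * u y) := by rw [h1']
  nlinarith

/-- Interior bound, independent of boundary values, for subsolutions of `Δu = u³` on a ball. -/
lemma keller_osserman {n : ℕ} {u : EuclideanSpace ℝ (Fin n) → ℝ}
    {x₀ : EuclideanSpace ℝ (Fin n)} {R : ℝ} (hR : 0 < R)
    (hu : ∀ x ∈ closedBall x₀ R, ContDiffAt ℝ 2 u x)
    (hsub : ∀ x ∈ closedBall x₀ R, 0 < u x → u x ^ 3 ≤ lap u x) :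
    ∀ x ∈ closedBall x₀ R, (R ^ 2 - ‖x - x₀‖ ^ 2) * u x ≤ (2 * n + 8) * R := by
  have hc : ContinuousOn (fun x => (R ^ 2 - ‖x - x₀‖ ^ 2) * u x) (closedBall x₀ R) := by
    have h1 : ContinuousOn u (closedBall x₀ R) := fun x hx =>
      (hu x hx).continuousAt.continuousWithinAt
    fun_prop
  obtain ⟨y, hy, hymax⟩ := (isCompact_closedBall x₀ R).exists_isMaxOn
    ⟨x₀, mem_closedBall_self hR.le⟩ hc
  intro x hx
  refine (hymax hx).trans ?_
  by_contra! hlt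
  have hn : (0 : ℝ) ≤ n := n.cast_nonneg
  have hC : 0 < (2 * (n : ℝ) + 8) * R := by positivity
  have hyR : ‖y - x₀‖ ≤ R := by rwa [mem_closedBall, dist_eq_norm] at hy
  have hρ0 : 0 ≤ R ^ 2 - ‖y - x₀‖ ^ 2 := by nlinarith [norm_nonneg (y - x₀)]
  have hρ : 0 < R ^ 2 - ‖y - x₀‖ ^ 2 := by
    rcases hρ0.eq_or_lt with h | h
    · rw [← h] at hlt; linarith
    · exact h
  have huy : 0 < u y := pos_of_mul_pos_right (hC.trans hlt) hρ0
  have hyball : y ∈ ball x₀ R := by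
    rw [mem_ball, dist_eq_norm]
    exact lt_of_pow_lt_pow_left₀ 2 hR.le (by linarith)
  have hloc : IsLocalMax (fun x => (R ^ 2 - ‖x - x₀‖ ^ 2) * u x) y :=
    hymax.isLocalMax (Filter.mem_of_superset (isOpen_ball.mem_nhds hyball) ball_subset_closedBall)
  have hsum := Finset.sum_le_sum fun i (_ : i ∈ Finset.univ) =>
    coordinate_bound (hu y hy) hρ hloc i
  rw [← Finset.mul_sum, ← Finset.mul_sum, Finset.sum_add_distrib,
    ← Finset.mul_sum (f := fun i => ((y - x₀) i) ^ 2),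
    ← EuclideanSpace.real_norm_sq_eq] at hsum
  simp only [Finset.sum_const, Finset.card_univ, Fintype.card_fin, nsmul_eq_mul] at hsum
  change _ * lap u y ≤ _ at hsum
  have hs := hsub y hy huy
  set ρ := R ^ 2 - ‖y - x₀‖ ^ 2 with hρdef
  have hr2 : 0 ≤ ‖y - x₀‖ ^ 2 := by positivity
  have h1 : ρ ^ 2 * u y ^ 3 ≤ u y * ((2 * n + 8) * R ^ 2) := by
    calc ρ ^ 2 * u y ^ 3 ≤ ρ ^ 2 * lap u y := by gcongr
      _ ≤ _ := hsum
      _ ≤ _ := by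
        apply mul_le_mul_of_nonneg_left _ huy.le
        nlinarith [mul_nonneg hn hr2]
  have h2 : (ρ * u y) ^ 2 ≤ (2 * n + 8) * R ^ 2 := by
    refine le_of_mul_le_mul_left ?_ huy
    calc _ = ρ ^ 2 * u y ^ 3 := by ring
      _ ≤ _ := h1
  have h3 : ((2 * (n : ℝ) + 8) * R) ^ 2 < (ρ * u y) ^ 2 := by gcongr
  have h4 : (2 * (n : ℝ) + 8) * R ^ 2 ≤ ((2 * (n : ℝ) + 8) * R) ^ 2 := by
    rw [mul_pow]
    gcongr
    nlinarith
  linarith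

theorem stmt_14 (n : ℕ) (hn : 2 ≤ n) (M : Set (EuclideanSpace ℝ (Fin n)))
    (hMne : M.Nonempty) (hMopen : IsOpen M) (hMbdd : Bornology.IsBounded M)
    (hMconn : IsConnected M) :
    ∃ a₁ a₂ : EuclideanSpace ℝ (Fin n) × ℝ → ℝ,
      ContDiffOn ℝ 2 a₁ (closure M ×ˢ (univ : Set ℝ)) ∧
      ContDiffOn ℝ 2 a₂ (closure M ×ˢ (univ : Set ℝ)) ∧
      (∃ p ∈ closure M ×ˢ (univ : Set ℝ), a₁ p ≠ a₂ p) ∧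
      (∀ x ∈ closure M, a₁ (x, 0) = 0) ∧
      (∀ x ∈ closure M, a₂ (x, 0) = 0) ∧
      (∀ x ∈ closure M, ∀ μ : ℝ, 0 ≤ deriv (fun t => a₁ (x, t)) μ) ∧
      (∀ x ∈ closure M, ∀ μ : ℝ, 0 ≤ deriv (fun t => a₂ (x, t)) μ) ∧
      (∀ u : EuclideanSpace ℝ (Fin n) → ℝ,
        ContinuousOn u (closure M) → ContDiffOn ℝ 2 u M →
        ((∀ x ∈ M, -lap u x + a₁ (x, u x) = 0) ↔
         (∀ x ∈ M, -lap u x + a₂ (x, u x) = 0))) := by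
  obtain ⟨x₀, hx₀⟩ := hMne
  obtain ⟨R, hR, hball⟩ := nhds_basis_closedBall.mem_iff.1 (hMopen.mem_nhds hx₀)
  let φ : ContDiffBump x₀ := ⟨R / 4, R / 2, by positivity, by linarith⟩
  set K : ℝ := 2 * ((2 * n + 8) * R) / R ^ 2 with hK
  have hKpos : 0 < K := by positivity
  let g : ℝ → ℝ := fun t => Real.smoothTransition (t - K)
  have hg : ContDiff ℝ 2 g := Real.smoothTransition.contDiff.comp (contDiff_id.sub contDiff_const)
  have hg0 : ∀ t ≤ K, g t = 0 := fun t ht =>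
    Real.smoothTransition.zero_of_nonpos (by linarith)
  have hgnn : ∀ t, 0 ≤ g t := fun t => Real.smoothTransition.nonneg _
  have hgmono : Monotone g := fun s t hst => Real.smoothTransition.monotone (by linarith)
  have hcube : Monotone fun t : ℝ => t ^ 3 := (Odd.strictMono_pow (by decide)).monotone
  -- The perturbation vanishes along every subsolution of the unperturbed equation.
  have key : ∀ u : EuclideanSpace ℝ (Fin n) → ℝ, ContDiffOn ℝ 2 u M →
      (∀ x ∈ M, u x ^ 3 ≤ lap u x) → ∀ x, φ x * g (u x) = 0 := by
    intro u hu hsub x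
    by_cases hx : x ∈ ball x₀ (R / 2)
    · rw [mem_ball, dist_eq_norm] at hx
      have hb := keller_osserman hR
        (fun z hz => hu.contDiffAt (hMopen.mem_nhds (hball hz)))
        (fun z hz _ => hsub z (hball hz)) x (by rw [mem_closedBall, dist_eq_norm]; linarith)
      rw [hg0, mul_zero]
      by_contra! hlt
      have h1 : R ^ 2 / 2 < R ^ 2 - ‖x - x₀‖ ^ 2 := by nlinarith [norm_nonneg (x - x₀)]
      have h2 : R ^ 2 / 2 * K = (2 * n + 8) * R := by rw [hK]; field_simp
      have h3 : R ^ 2 / 2 * K < (R ^ 2 - ‖x - x₀‖ ^ 2) * u x :=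
        mul_lt_mul'' h1 hlt (by positivity) hKpos.le
      linarith
    · have : φ x = 0 := φ.zero_of_le_dist (by simpa using hx)
      rw [this, zero_mul]
  refine ⟨fun p => p.2 ^ 3, fun p => p.2 ^ 3 + φ p.1 * g p.2, ?_, ?_, ?_, ?_, ?_, ?_, ?_, ?_⟩
  · exact (contDiff_snd.pow 3).contDiffOn
  · exact ((contDiff_snd.pow 3).add
      ((φ.contDiff.comp contDiff_fst).mul (hg.comp contDiff_snd))).contDiffOn
  · refine ⟨(x₀, K + 1), ⟨subset_closure hx₀, mem_univ _⟩, ?_⟩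
    have h1 : φ x₀ = 1 := φ.one_of_mem_closedBall (mem_closedBall_self φ.rIn_pos.le)
    have h2 : g (K + 1) = 1 := Real.smoothTransition.one_of_one_le (by linarith)
    simp [h1, h2]
  · intro x _
    simp
  · intro x _
    simp [hg0 0 hKpos.le]
  · intro x _ μ
    exact hcube.deriv_nonneg
  · intro x _ μ
    exact (hcube.add (hgmono.const_mul (φ.nonneg' x))).deriv_nonneg
  · intro u _ hu
    constructor
    · intro h x hx
      have h0 := key u hu (fun z hz => by linarith [h z hz]) x
      have := h x hx
      simp only [h0] at this ⊢
      linarith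
    · intro h x hx
      have h0 := key u hu (fun z hz => by
        have h1 := h z hz
        have h2 := mul_nonneg (φ.nonneg' z) (hgnn (u z))
        simp only at h1
        linarith) x
      have := h x hx
      simp only [h0] at this ⊢
      linarith
end
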